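/- Let Γ be a crystallographic group acting isometrically, properly discontinuously and cocompactly on ℝ^m (a Bieberbach group). Then the subgroup A₀ of pure translations in Γ is free abelian of rank m, has finite index in Γ, and is the unique maximal normal free abelian subgroup; consequently there is a short exact sequence 1 → A₀ → Γ → T → 1 with T finite. -/

import Mathlib

/-- The subgroup of pure translations of a group acting on `ℝ^m`. -/
def transSub (m : ℕ) (G : Type*) [Group G]
    [MulAction G (EuclideanSpace ℝ (Fin m))] : Subgroup G where
  carrier := {g : G | ∃ v : EuclideanSpace ℝ (Fin m), ∀ x, g • x = x + v}
  one_mem' := ⟨0, fun x => by simp⟩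
  mul_mem' := by
    rintro a b ⟨v, hv⟩ ⟨w, hw⟩
    exact ⟨w + v, fun x => by rw [mul_smul, hw, hv, add_assoc]⟩
  inv_mem' := by
    rintro g ⟨v, hv⟩
    refine ⟨-v, fun x => ?_⟩
    have h1 : g • (x + -v) = x := by rw [hv]; abel
    calc g⁻¹ • x = g⁻¹ • (g • (x + -v)) := by rw [h1]
      _ = x + -v := inv_smul_smul g _

/-!
This is Buser's proof. The key claim is that an element of `G` whose linear part is within `1 / 2`
of the identity in operator norm is a translation. Otherwise choose such a non-translation `a` with
`‖a • 0‖` minimal, and let `T` be its linear part minus the identity. The vectors on which `T`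
attains its norm form a `T`-invariant subspace `K`, and `T` has strictly smaller norm on the
invariant complement `Kᗮ`. By cocompactness some elements of `G` move `0` to within bounded distance
of the multiples of a fixed vector of `K`, and by compactness the linear parts of two of them nearly
agree, so their quotient `b` is almost a translation and moves `0` in a direction close to `K`.
Choose such a `b` with `‖b • 0‖` minimal. Up to a small error `⁅a, b⁆ • 0 = T (b • 0)`, because the
choice of `a` gives `‖a • 0‖ ≤ ‖b • 0‖` unless `b` is a translation. Hence `⁅a, b⁆` is at least as
close to a translation as `b`, still moves `0` in a direction close to `K`, and moves it a shorter
way: a contradiction.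

The claim makes the group of linear parts discrete, hence finite. If the translations did not span,
the construction of `b`, applied to the orthogonal complement of their span, would yield a
translation out of that span. So the translations form a discrete spanning subgroup, a lattice.
-/

open Filter Metric Topology
open scoped commutatorElement InnerProductSpace

section NormAttaining

open ContinuousLinearMap

theorem exists_norm_le_one_norm_apply_eq_opNorm {𝕜 E F : Type*} [DenselyNormedField 𝕜]
    [NormedAddCommGroup E] [NormedSpace 𝕜 E] [ProperSpace E]
    [SeminormedAddCommGroup F] [NormedSpace 𝕜 F] (T : E →L[𝕜] F) :
    ∃ x, ‖x‖ ≤ 1 ∧ ‖T x‖ = ‖T‖ := by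
  obtain ⟨x, hx, hTx⟩ := (isCompact_closedBall (0 : E) 1).exists_sSup_image_eq
    ⟨0, mem_closedBall_self zero_le_one⟩ (f := fun x => ‖T x‖) (by fun_prop)
  exact ⟨x, mem_closedBall_zero_iff.1 hx, hTx.symm.trans T.sSup_unitClosedBall_eq_norm⟩

variable {𝕜 E F : Type*} [RCLike 𝕜]
  [NormedAddCommGroup E] [InnerProductSpace 𝕜 E]
  [NormedAddCommGroup F] [InnerProductSpace 𝕜 F]

/-- The subspace of vectors `x` with `‖T x‖ = ‖T‖ * ‖x‖`, encoded as the eigenspace of `T† ∘ T` for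
the eigenvalue `‖T‖ ^ 2`, which makes it visibly linear. -/
noncomputable def normAttainingSubspace [CompleteSpace E] [CompleteSpace F] (T : E →L[𝕜] F) :
    Submodule 𝕜 E :=
  Module.End.eigenspace (adjoint T ∘L T) ((‖T‖ ^ 2 : ℝ) : 𝕜)

theorem mem_normAttainingSubspace_iff [CompleteSpace E] [CompleteSpace F] {T : E →L[𝕜] F} {x : E} :
    x ∈ normAttainingSubspace T ↔ ‖T x‖ = ‖T‖ * ‖x‖ := by
  have hsq : ‖T x‖ ^ 2 = RCLike.re ⟪(adjoint T ∘L T) x, x⟫_𝕜 :=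
    T.apply_norm_sq_eq_inner_adjoint_left x
  rw [normAttainingSubspace, Module.End.mem_eigenspace_iff, coe_coe]
  constructor <;> intro hx
  · rw [hx, inner_smul_left, RCLike.conj_ofReal, RCLike.re_ofReal_mul,
      ← norm_sq_eq_re_inner, ← mul_pow] at hsq
    exact (pow_left_inj₀ (norm_nonneg _) (by positivity) two_ne_zero).1 hsq
  · have hadj : ‖(adjoint T ∘L T) x‖ ≤ ‖T‖ * (‖T‖ * ‖x‖) := by
      rw [← hx, ← adjoint.norm_map T]
      exact (adjoint T).le_opNorm (T x)
    have hexpand : ‖(adjoint T ∘L T) x - ((‖T‖ ^ 2 : ℝ) : 𝕜) • x‖ ^ 2 =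
        ‖(adjoint T ∘L T) x‖ ^ 2 - (‖T‖ * (‖T‖ * ‖x‖)) ^ 2 := by
      rw [@norm_sub_sq 𝕜, inner_smul_right, RCLike.re_ofReal_mul, ← hsq, hx, norm_smul,
        RCLike.norm_ofReal, abs_of_nonneg (by positivity)]
      ring
    have hle : ‖(adjoint T ∘L T) x - ((‖T‖ ^ 2 : ℝ) : 𝕜) • x‖ ^ 2 ≤ 0 := by
      rw [hexpand, sub_nonpos]
      gcongr
    exact sub_eq_zero.1 (norm_eq_zero.1 (pow_eq_zero_iff two_ne_zero |>.1
      (hle.antisymm (sq_nonneg _))))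

theorem mem_normAttainingSubspace_of_norm_le_one [CompleteSpace E] [CompleteSpace F]
    {T : E →L[𝕜] F} {x : E} (hx : ‖x‖ ≤ 1) (hTx : ‖T x‖ = ‖T‖) :
    x ∈ normAttainingSubspace T :=
  mem_normAttainingSubspace_iff.2 <| (T.le_opNorm x).antisymm <| by
    simpa only [hTx] using mul_le_of_le_one_right (norm_nonneg T) hx

theorem normAttainingSubspace_ne_bot [ProperSpace E] [CompleteSpace F] {T : E →L[𝕜] F}
    (hT : T ≠ 0) : normAttainingSubspace T ≠ ⊥ := by
  obtain ⟨x, hx, hTx⟩ := exists_norm_le_one_norm_apply_eq_opNorm T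
  refine (Submodule.ne_bot_iff _).2 ⟨x, mem_normAttainingSubspace_of_norm_le_one hx hTx, ?_⟩
  rintro rfl
  exact hT (norm_eq_zero.1 (by rw [← hTx, map_zero, norm_zero]))

theorem norm_comp_subtypeL_orthogonal_normAttainingSubspace_lt [ProperSpace E] [CompleteSpace F]
    {T : E →L[𝕜] F} (hT : T ≠ 0) : ‖T ∘L (normAttainingSubspace T)ᗮ.subtypeL‖ < ‖T‖ := by
  set K := normAttainingSubspace T
  have hle : ‖T ∘L Kᗮ.subtypeL‖ ≤ ‖T‖ := (opNorm_comp_le _ _).trans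
    (mul_le_of_le_one_right (norm_nonneg T) Kᗮ.norm_subtypeL_le)
  have : ProperSpace Kᗮ := .of_isClosed K.isClosed_orthogonal
  refine hle.lt_of_ne fun heq => hT ?_
  obtain ⟨x, hx, hTx⟩ := exists_norm_le_one_norm_apply_eq_opNorm (T ∘L Kᗮ.subtypeL)
  have hTx' : ‖T x‖ = ‖T‖ := hTx.trans heq
  have hx0 : (x : E) = 0 := K.orthogonal_disjoint.le_bot
    ⟨mem_normAttainingSubspace_of_norm_le_one hx hTx', x.2⟩
  rw [← norm_eq_zero, ← hTx', hx0, map_zero, norm_zero]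

theorem isClosed_normAttainingSubspace [CompleteSpace E] [CompleteSpace F] (T : E →L[𝕜] F) :
    IsClosed (normAttainingSubspace T : Set E) := by
  have hset : (normAttainingSubspace T : Set E) = {x | ‖T x‖ = ‖T‖ * ‖x‖} :=
    Set.ext fun _ => mem_normAttainingSubspace_iff
  rw [hset]
  exact isClosed_eq (by fun_prop) (by fun_prop)

instance hasOrthogonalProjection_normAttainingSubspace [CompleteSpace E] [CompleteSpace F]
    (T : E →L[𝕜] F) : (normAttainingSubspace T).HasOrthogonalProjection :=
  have := (isClosed_normAttainingSubspace T).completeSpace_coe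
  .ofCompleteSpace _

/-- The drop of the operator norm of `T` upon restriction to the orthogonal complement of its
norm-attaining subspace. -/
noncomputable def normGap [CompleteSpace E] [CompleteSpace F] (T : E →L[𝕜] F) : ℝ :=
  ‖T‖ - ‖T ∘L (normAttainingSubspace T)ᗮ.subtypeL‖

theorem normGap_pos [ProperSpace E] [CompleteSpace F] {T : E →L[𝕜] F} (hT : T ≠ 0) :
    0 < normGap T :=
  sub_pos.2 (norm_comp_subtypeL_orthogonal_normAttainingSubspace_lt hT)

theorem normGap_le_opNorm [CompleteSpace E] [CompleteSpace F] (T : E →L[𝕜] F) :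
    normGap T ≤ ‖T‖ :=
  sub_le_self _ (norm_nonneg _)

end NormAttaining

section Cone

variable {𝕜 E : Type*} [RCLike 𝕜] [NormedAddCommGroup E] [InnerProductSpace 𝕜 E]

/-- The open cone of vectors making an angle less than `π / 4` with the subspace `K`. -/
def coneAround (K : Submodule 𝕜 E) [K.HasOrthogonalProjection] : Set E :=
  {v | ‖Kᗮ.starProjection v‖ < ‖K.starProjection v‖}

variable {K : Submodule 𝕜 E} [K.HasOrthogonalProjection]

theorem mem_coneAround_of_norm_sub_lt {u v : E} (hu : u ∈ K) (huv : 2 * ‖v - u‖ < ‖u‖) :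
    v ∈ coneAround K := by
  have horth : Kᗮ.starProjection v = Kᗮ.starProjection (v - u) := by
    rw [map_sub, K.starProjection_orthogonal_apply_eq_zero hu, sub_zero]
  have hproj : u = K.starProjection v - K.starProjection (v - u) := by
    rw [map_sub, Submodule.starProjection_eq_self_iff.2 hu, sub_sub_cancel]
  have htri : ‖u‖ ≤ ‖K.starProjection v‖ + ‖K.starProjection (v - u)‖ :=
    (congrArg norm hproj).trans_le (norm_sub_le _ _)
  have := K.norm_starProjection_apply_le (v - u)
  have := Kᗮ.norm_starProjection_apply_le (v - u)
  rw [coneAround, Set.mem_ofPred_eq, horth]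
  linarith

theorem norm_lt_of_mem_coneAround {v : E} (hv : v ∈ coneAround K) :
    ‖v‖ < 2 * ‖K.starProjection v‖ := by
  have hv' : ‖Kᗮ.starProjection v‖ < ‖K.starProjection v‖ := hv
  calc ‖v‖ = ‖K.starProjection v + Kᗮ.starProjection v‖ := by
        rw [K.starProjection_add_starProjection_orthogonal]
    _ ≤ ‖K.starProjection v‖ + ‖Kᗮ.starProjection v‖ := norm_add_le _ _
    _ < 2 * ‖K.starProjection v‖ := by linarith

theorem norm_pos_of_mem_coneAround {v : E} (hv : v ∈ coneAround K) : 0 < ‖v‖ :=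
  ((norm_nonneg _).trans_lt hv).trans_le (K.norm_starProjection_apply_le v)

theorem mem_coneAround_of_dominated {T : E →L[𝕜] E} {M M' : ℝ} (hM' : 0 ≤ M') (hlt : M' < M)
    (hK : ∀ x ∈ K, T x ∈ K) (hK' : ∀ x ∈ Kᗮ, T x ∈ Kᗮ)
    (hKM : ∀ x ∈ K, M * ‖x‖ ≤ ‖T x‖) (hKM' : ∀ x ∈ Kᗮ, ‖T x‖ ≤ M' * ‖x‖)
    {v w : E} (hv : v ∈ coneAround K) (hw : 4 * ‖w - T v‖ ≤ (M - M') * ‖v‖) :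
    w ∈ coneAround K := by
  have hp : K.starProjection v ∈ K := K.starProjection_apply_mem v
  have hq : Kᗮ.starProjection v ∈ Kᗮ := Kᗮ.starProjection_apply_mem v
  have hTv : T v = T (K.starProjection v) + T (Kᗮ.starProjection v) := by
    rw [← map_add, K.starProjection_add_starProjection_orthogonal]
  have hcommK : K.starProjection (T v) = T (K.starProjection v) := by
    rw [hTv, map_add, Submodule.starProjection_eq_self_iff.2 (hK _ hp),
      K.starProjection_apply_eq_zero_iff.2 (hK' _ hq), add_zero]
  have hcommK' : Kᗮ.starProjection (T v) = T (Kᗮ.starProjection v) := by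
    rw [hTv, map_add, Submodule.starProjection_eq_self_iff.2 (hK' _ hq),
      K.starProjection_orthogonal_apply_eq_zero (hK _ hp), zero_add]
  have herr : 2 * ‖w - T v‖ < (M - M') * ‖K.starProjection v‖ := by
    have := mul_lt_mul_of_pos_left (norm_lt_of_mem_coneAround hv) (sub_pos.2 hlt)
    linarith
  have hdiff : ‖K.starProjection w - T (K.starProjection v)‖ ≤ ‖w - T v‖ := by
    rw [← hcommK, ← map_sub]
    exact K.norm_starProjection_apply_le _
  have hdiff' : ‖Kᗮ.starProjection w - T (Kᗮ.starProjection v)‖ ≤ ‖w - T v‖ := by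
    rw [← hcommK', ← map_sub]
    exact Kᗮ.norm_starProjection_apply_le _
  have hMM' : M' * ‖Kᗮ.starProjection v‖ ≤ M' * ‖K.starProjection v‖ :=
    mul_le_mul_of_nonneg_left (le_of_lt hv) hM'
  change ‖Kᗮ.starProjection w‖ < ‖K.starProjection w‖
  linarith [norm_le_insert (K.starProjection w) (T (K.starProjection v)), hKM _ hp,
    norm_le_insert' (Kᗮ.starProjection w) (T (Kᗮ.starProjection v)), hKM' _ hq]

end Cone

section Displacement

variable {𝕜 E : Type*} [NontriviallyNormedField 𝕜] [NormedAddCommGroup E] [NormedSpace 𝕜 E]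

/-- The operator `A - 1`, whose operator norm measures how far the linear isometry `A` is from the
identity. -/
noncomputable def displacement (A : E ≃ₗᵢ[𝕜] E) : E →L[𝕜] E :=
  (A : E →L[𝕜] E) - 1

theorem displacement_apply (A : E ≃ₗᵢ[𝕜] E) (x : E) : displacement A x = A x - x := rfl

theorem displacement_eq_zero_iff {A : E ≃ₗᵢ[𝕜] E} : displacement A = 0 ↔ A = 1 := by
  simp only [ContinuousLinearMap.ext_iff, LinearIsometryEquiv.ext_iff, displacement_apply,
    zero_apply, sub_eq_zero, LinearIsometryEquiv.coe_one, id_eq]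

theorem norm_displacement_mul_inv (A B : E ≃ₗᵢ[𝕜] E) :
    ‖displacement (A * B⁻¹)‖ = ‖(A : E →L[𝕜] E) - B‖ := by
  have hfactor : displacement (A * B⁻¹) * B = (A : E →L[𝕜] E) - B :=
    ContinuousLinearMap.ext fun x => congrArg (A · - B x) (B.symm_apply_apply x)
  rw [← hfactor, ContinuousLinearMap.opNorm_mul_linearIsometryEquiv]

theorem norm_displacement_conj (A B : E ≃ₗᵢ[𝕜] E) :
    ‖displacement (A * B * A⁻¹)‖ = ‖displacement B‖ := by
  have hfactor : ((A * B : E ≃ₗᵢ[𝕜] E) : E →L[𝕜] E) - A = A * displacement B :=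
    ContinuousLinearMap.ext fun x => (A.map_sub (B x) x).symm
  rw [norm_displacement_mul_inv, hfactor, ContinuousLinearMap.opNorm_linearIsometryEquiv_mul]

theorem norm_displacement_commutator_le (A B : E ≃ₗᵢ[𝕜] E) :
    ‖displacement ⁅A, B⁆‖ ≤ 2 * ‖displacement A‖ * ‖displacement B‖ := by
  have hcomm : ⁅A, B⁆ = A * B * (B * A)⁻¹ := by rw [commutatorElement_def]; group
  have hdiff : ((A * B : E ≃ₗᵢ[𝕜] E) : E →L[𝕜] E) - (B * A : E ≃ₗᵢ[𝕜] E) =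
      displacement A * displacement B - displacement B * displacement A := by
    change (A : E →L[𝕜] E) * B - (B : E →L[𝕜] E) * A = _
    rw [displacement, displacement]
    noncomm_ring
  rw [hcomm, norm_displacement_mul_inv, hdiff]
  calc ‖displacement A * displacement B - displacement B * displacement A‖
      ≤ ‖displacement A‖ * ‖displacement B‖ + ‖displacement B‖ * ‖displacement A‖ :=
        (norm_sub_le _ _).trans (add_le_add (norm_mul_le _ _) (norm_mul_le _ _))
    _ = 2 * ‖displacement A‖ * ‖displacement B‖ := by ring

theorem exists_frequently_norm_displacement_mul_inv_le [ProperSpace (E →L[𝕜] E)]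
    (A : ℕ → E ≃ₗᵢ[𝕜] E) {ε : ℝ} (hε : 0 < ε) :
    ∃ i, ∃ᶠ j in atTop, ‖displacement (A j * (A i)⁻¹)‖ ≤ ε := by
  have hbdd : ∀ k, (A k : E →L[𝕜] E) ∈ closedBall 0 1 := fun k =>
    mem_closedBall_zero_iff.2 (A k).toLinearIsometry.norm_toContinuousLinearMap_le
  obtain ⟨l, -, φ, hφ, hl⟩ := tendsto_subseq_of_bounded isBounded_closedBall hbdd
  obtain ⟨N, hN⟩ := Metric.cauchySeq_iff'.1 hl.cauchySeq ε hε
  refine ⟨φ N, hφ.tendsto_atTop.frequently (Eventually.frequently ?_)⟩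
  filter_upwards [eventually_ge_atTop N] with n hn
  rw [norm_displacement_mul_inv, ← dist_eq_norm]
  exact (hN n hn).le

theorem finite_of_forall_norm_displacement_le [ProperSpace (E →L[𝕜] E)]
    {H : Subgroup (E ≃ₗᵢ[𝕜] E)} {ε : ℝ} (hε : 0 < ε)
    (hH : ∀ A ∈ H, ‖displacement A‖ ≤ ε → A = 1) : Finite H := by
  by_contra hfin
  have : Infinite H := not_finite_iff_infinite.1 hfin
  let A : ℕ ↪ H := Infinite.natEmbedding H
  obtain ⟨i, hi⟩ := exists_frequently_norm_displacement_mul_inv_le (fun k => (A k : E ≃ₗᵢ[𝕜] E)) hε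
  obtain ⟨j, hj, hij⟩ := (hi.and_eventually (eventually_gt_atTop i)).exists
  have heq := hH _ (A j * (A i)⁻¹).2 hj
  exact hij.ne' (A.injective (mul_inv_eq_one.1 (Subtype.ext heq)))

end Displacement

section DisplacementCone

variable {𝕜 E : Type*} [RCLike 𝕜] [NormedAddCommGroup E] [InnerProductSpace 𝕜 E]

theorem apply_mem_normAttainingSubspace_displacement_iff [CompleteSpace E] {A : E ≃ₗᵢ[𝕜] E}
    {x : E} :
    A x ∈ normAttainingSubspace (displacement A) ↔ x ∈ normAttainingSubspace (displacement A) := by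
  have hcomm : displacement A (A x) = A (displacement A x) := (A.map_sub (A x) x).symm
  rw [mem_normAttainingSubspace_iff, mem_normAttainingSubspace_iff, hcomm, A.norm_map, A.norm_map]

theorem displacement_mem_normAttainingSubspace [CompleteSpace E] {A : E ≃ₗᵢ[𝕜] E} {x : E}
    (hx : x ∈ normAttainingSubspace (displacement A)) :
    displacement A x ∈ normAttainingSubspace (displacement A) :=
  sub_mem (apply_mem_normAttainingSubspace_displacement_iff.2 hx) hx

theorem displacement_mem_orthogonal_normAttainingSubspace [CompleteSpace E] {A : E ≃ₗᵢ[𝕜] E}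
    {x : E} (hx : x ∈ (normAttainingSubspace (displacement A))ᗮ) :
    displacement A x ∈ (normAttainingSubspace (displacement A))ᗮ := by
  refine sub_mem ((Submodule.mem_orthogonal _ _).2 fun u hu => ?_) hx
  rw [← A.apply_symm_apply u] at hu ⊢
  exact (A.inner_map_map _ _).trans <| (Submodule.mem_orthogonal _ _).1 hx _
    (apply_mem_normAttainingSubspace_displacement_iff.1 hu)

theorem mem_coneAround_of_norm_sub_displacement_le [ProperSpace E] {A : E ≃ₗᵢ[𝕜] E} (hA : A ≠ 1)
    {v w : E} (hv : v ∈ coneAround (normAttainingSubspace (displacement A)))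
    (hw : 4 * ‖w - displacement A v‖ ≤ normGap (displacement A) * ‖v‖) :
    w ∈ coneAround (normAttainingSubspace (displacement A)) :=
  mem_coneAround_of_dominated (norm_nonneg _)
    (norm_comp_subtypeL_orthogonal_normAttainingSubspace_lt
      (displacement_eq_zero_iff.not.2 hA))
    (fun _ => displacement_mem_normAttainingSubspace)
    (fun _ => displacement_mem_orthogonal_normAttainingSubspace)
    (fun _ hx => (mem_normAttainingSubspace_iff.1 hx).ge)
    (fun x hx => (displacement A ∘L (normAttainingSubspace (displacement A))ᗮ.subtypeL).le_opNorm
      ⟨x, hx⟩) hv hw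

end DisplacementCone

section LinearPart

variable (G E : Type*) [Group G] [NormedAddCommGroup E] [NormedSpace ℝ E]
  [MulAction G E] [IsIsometricSMul G E]

/-- The linear part of an isometric action on a real normed space; by the Mazur-Ulam theorem every
`g : G` acts as `x ↦ linearPart G E g x + g • 0`. -/
noncomputable def linearPart : G →* (E ≃ₗᵢ[ℝ] E) :=
  MonoidHom.mk' (fun g => (IsometryEquiv.constSMul g).toRealLinearIsometryEquiv) fun g h => by
    ext x
    rw [LinearIsometryEquiv.coe_mul, Function.comp_apply,
      IsometryEquiv.toRealLinearIsometryEquiv_apply (.constSMul h), map_sub]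
    simp only [IsometryEquiv.toRealLinearIsometryEquiv_apply, IsometryEquiv.constSMul_apply,
      mul_smul, sub_sub_sub_cancel_right]

variable {G E}

theorem linearPart_apply (g : G) (x : E) : linearPart G E g x = g • x - g • (0 : E) :=
  IsometryEquiv.toRealLinearIsometryEquiv_apply _ x

theorem smul_eq_linearPart_add (g : G) (x : E) : g • x = linearPart G E g x + g • (0 : E) := by
  rw [linearPart_apply, sub_add_cancel]

theorem smul_eq_add_of_mem_ker_linearPart {g : G} (hg : g ∈ (linearPart G E).ker) (x : E) :
    g • x = x + g • (0 : E) := by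
  rw [smul_eq_linearPart_add, MonoidHom.mem_ker.1 hg, LinearIsometryEquiv.coe_one, id_eq]

theorem mem_ker_linearPart_iff {g : G} :
    g ∈ (linearPart G E).ker ↔ ∃ v : E, ∀ x : E, g • x = x + v := by
  refine ⟨fun hg => ⟨g • 0, smul_eq_add_of_mem_ker_linearPart hg⟩, ?_⟩
  rintro ⟨v, hv⟩
  ext x
  simp [linearPart_apply, hv]

theorem commutator_smul_zero (a b : G) :
    ⁅a, b⁆ • (0 : E) = displacement (linearPart G E a) (b • 0)
      - displacement (linearPart G E ⁅a, b⁆) (b • 0)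
      - displacement (linearPart G E (a * b * a⁻¹)) (a • 0) := by
  have hswap : ⁅a, b⁆ • b • a • (0 : E) = a • b • (0 : E) := by
    simp only [commutatorElement_def, mul_smul, inv_smul_smul]
  have hleft : ⁅a, b⁆ • b • a • (0 : E) = linearPart G E (a * b * a⁻¹) (a • 0) +
      linearPart G E ⁅a, b⁆ (b • 0) + ⁅a, b⁆ • (0 : E) := by
    have hprod : linearPart G E ⁅a, b⁆ (linearPart G E b (a • 0)) =
        linearPart G E (a * b * a⁻¹) (a • 0) := by
      rw [← inv_mul_cancel_right (a * b * a⁻¹) b, ← commutatorElement_def, map_mul,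
        LinearIsometryEquiv.coe_mul, Function.comp_apply]
    rw [smul_eq_linearPart_add ⁅a, b⁆, smul_eq_linearPart_add b, map_add, hprod]
  have hright : a • b • (0 : E) = linearPart G E a (b • 0) + a • (0 : E) :=
    smul_eq_linearPart_add a _
  have hsolve := sub_eq_iff_eq_add'.2 (hleft.symm.trans (hswap.trans hright)).symm
  simp only [displacement_apply]
  rw [← hsolve]
  abel

theorem norm_commutator_smul_zero_sub_le (a b : G) :
    ‖⁅a, b⁆ • (0 : E) - displacement (linearPart G E a) (b • 0)‖ ≤
      ‖displacement (linearPart G E b)‖ *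
        (2 * ‖displacement (linearPart G E a)‖ * ‖b • (0 : E)‖ + ‖a • (0 : E)‖) := by
  set A := linearPart G E a
  set B := linearPart G E b
  have hsplit : ⁅a, b⁆ • (0 : E) - displacement A (b • 0) =
      -(displacement ⁅A, B⁆ (b • 0) + displacement (A * B * A⁻¹) (a • 0)) := by
    rw [commutator_smul_zero, map_commutatorElement, map_mul, map_mul, map_inv]
    abel
  have hcomm : ‖displacement ⁅A, B⁆ (b • 0)‖ ≤
      2 * ‖displacement A‖ * ‖displacement B‖ * ‖b • (0 : E)‖ :=
    ContinuousLinearMap.le_of_opNorm_le _ (norm_displacement_commutator_le A B) _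
  have hconj : ‖displacement (A * B * A⁻¹) (a • 0)‖ ≤ ‖displacement B‖ * ‖a • (0 : E)‖ :=
    ContinuousLinearMap.le_of_opNorm_le _ (norm_displacement_conj A B).le _
  calc ‖⁅a, b⁆ • (0 : E) - displacement A (b • 0)‖
      ≤ 2 * ‖displacement A‖ * ‖displacement B‖ * ‖b • (0 : E)‖ +
          ‖displacement B‖ * ‖a • (0 : E)‖ := by
        rw [hsplit, norm_neg]
        exact (norm_add_le _ _).trans (add_le_add hcomm hconj)
    _ = ‖displacement B‖ * (2 * ‖displacement A‖ * ‖b • (0 : E)‖ + ‖a • (0 : E)‖) := by ring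

variable (G E) in
/-- The homomorphism sending an element with trivial linear part to the vector by which it
translates. -/
noncomputable def translationVector : Additive (linearPart G E).ker →+ E where
  toFun g := g.toMul • 0
  map_zero' := one_smul _ _
  map_add' g h := by
    rw [toMul_add, mul_smul, add_comm]
    exact smul_eq_add_of_mem_ker_linearPart g.toMul.2 _

theorem translationVector_injective [FaithfulSMul G E] :
    Function.Injective (translationVector G E) := fun g h hgh =>
  Subtype.ext <| eq_of_smul_eq_smul (α := E) fun x => by
    rw [smul_eq_add_of_mem_ker_linearPart g.2, smul_eq_add_of_mem_ker_linearPart h.2]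
    exact congrArg (x + ·) hgh

end LinearPart

theorem nonempty_addEquiv_pi_int_of_tendsto_cofinite_cocompact {A E : Type*} [AddGroup A]
    [NormedAddCommGroup E] [NormedSpace ℝ E] [FiniteDimensional ℝ E] {f : A →+ E}
    (hinj : Function.Injective f) (hf : Tendsto f cofinite (cocompact E))
    (hspan : Submodule.span ℝ (Set.range f) = ⊤) :
    Nonempty (A ≃+ (Fin (Module.finrank ℝ E) → ℤ)) := by
  let e : A ≃+ f.range := AddMonoidHom.ofInjective hinj
  let Λ : Submodule ℤ E := AddSubgroup.toIntSubmodule f.range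
  have : DiscreteTopology Λ := continuous_subtype_val.discrete_of_tendsto_cofinite_cocompact <| by
    have hval : (Subtype.val : f.range → E) = f ∘ e.symm :=
      funext fun v => (congrArg Subtype.val (e.apply_symm_apply v)).symm
    change Tendsto (Subtype.val : f.range → E) _ _
    rw [hval]
    exact hf.comp e.symm.injective.tendsto_cofinite
  have : IsZLattice ℝ Λ := ⟨hspan⟩
  exact ⟨e.trans (Module.finBasisOfFinrankEq ℤ Λ (ZLattice.rank ℝ Λ)).equivFun.toAddEquiv⟩

section Crystallographic

theorem tendsto_smul_cofinite_cocompact {G X : Type*} [SMul G X] [TopologicalSpace X]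
    (hpd : ∀ K : Set X, IsCompact K → {g : G | ((fun x => g • x) '' K ∩ K).Nonempty}.Finite)
    (x : X) : Tendsto (fun g : G => g • x) cofinite (cocompact X) := by
  refine (hasBasis_cocompact.tendsto_right_iff).2 fun K hK => eventually_cofinite.2 ?_
  refine (hpd (insert x K) (hK.insert x)).subset fun g hg => ?_
  exact ⟨g • x, ⟨x, Set.mem_insert x K, rfl⟩, Set.mem_insert_of_mem x (Set.notMem_compl_iff.1 hg)⟩

theorem exists_dist_smul_le {G X : Type*} [Group G] [PseudoMetricSpace X] [MulAction G X]
    [IsIsometricSMul G X] (hcc : ∃ K : Set X, IsCompact K ∧ ∀ x, ∃ g : G, ∃ y ∈ K, g • y = x)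
    (x₀ : X) : ∃ D : ℝ, ∀ x, ∃ g : G, dist (g • x₀) x ≤ D := by
  obtain ⟨K, hK, hcover⟩ := hcc
  obtain ⟨D, hD⟩ := hK.isBounded.subset_closedBall x₀
  refine ⟨D, fun x => ?_⟩
  obtain ⟨g, y, hy, rfl⟩ := hcover x
  exact ⟨g, by simpa only [dist_smul] using mem_closedBall'.1 (hD hy)⟩

variable {G E : Type*} [Group G] [NormedAddCommGroup E] [InnerProductSpace ℝ E]
  [FiniteDimensional ℝ E] [MulAction G E] [IsIsometricSMul G E] {D : ℝ}

theorem exists_norm_displacement_le_and_mem_coneAround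
    (hD : ∀ x : E, ∃ g : G, dist (g • (0 : E)) x ≤ D) {K : Submodule ℝ E} (hK : K ≠ ⊥)
    {ε : ℝ} (hε : 0 < ε) :
    ∃ g : G, ‖displacement (linearPart G E g)‖ ≤ ε ∧ g • (0 : E) ∈ coneAround K := by
  obtain ⟨u, huK, hu⟩ := K.exists_mem_ne_zero_of_ne_bot hK
  choose g hg using fun k : ℕ => hD ((k : ℝ) • u)
  obtain ⟨i, hi⟩ :=
    exists_frequently_norm_displacement_mul_inv_le (fun k => linearPart G E (g k)) hε
  have hlarge : ∀ᶠ j : ℕ in atTop, 2 * (‖g i • (0 : E)‖ + D) < j * ‖u‖ :=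
    (tendsto_natCast_atTop_atTop.atTop_mul_const (norm_pos_iff.2 hu)).eventually_gt_atTop _
  obtain ⟨j, hj, hij⟩ := (hi.and_eventually hlarge).exists
  have hback : ‖(g j * (g i)⁻¹) • (0 : E) - g j • (0 : E)‖ = ‖g i • (0 : E)‖ := by
    rw [← dist_eq_norm, mul_smul, dist_smul, ← dist_smul (g i), smul_inv_smul, dist_zero_left]
  refine ⟨g j * (g i)⁻¹, by simpa only [map_mul, map_inv] using hj,
    mem_coneAround_of_norm_sub_lt (K.smul_mem (j : ℝ) huK) ?_⟩
  calc 2 * ‖(g j * (g i)⁻¹) • (0 : E) - (j : ℝ) • u‖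
      ≤ 2 * (‖(g j * (g i)⁻¹) • (0 : E) - g j • (0 : E)‖ + ‖g j • (0 : E) - (j : ℝ) • u‖) := by
        gcongr
        exact norm_sub_le_norm_sub_add_norm_sub _ _ _
    _ ≤ 2 * (‖g i • (0 : E)‖ + D) := by
        rw [hback, ← dist_eq_norm (g j • (0 : E))]
        gcongr
        exact hg j
    _ < ‖(j : ℝ) • u‖ := by rwa [norm_smul (j : ℝ), Real.norm_natCast]

theorem commutator_mem_coneAround_and_norm_lt {a b : G} (ha : linearPart G E a ≠ 1)
    (ha' : ‖displacement (linearPart G E a)‖ ≤ 1 / 2)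
    (hab : linearPart G E b ≠ 1 → ‖a • (0 : E)‖ ≤ ‖b • (0 : E)‖)
    (hb : ‖displacement (linearPart G E b)‖ ≤ normGap (displacement (linearPart G E a)) / 8)
    (hcone : b • (0 : E) ∈ coneAround (normAttainingSubspace (displacement (linearPart G E a)))) :
    ⁅a, b⁆ • (0 : E) ∈ coneAround (normAttainingSubspace (displacement (linearPart G E a))) ∧
      ‖⁅a, b⁆ • (0 : E)‖ < ‖b • (0 : E)‖ := by
  set T := displacement (linearPart G E a)
  have herr : 4 * ‖⁅a, b⁆ • (0 : E) - T (b • 0)‖ ≤ normGap T * ‖b • (0 : E)‖ := by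
    have hab' : ‖displacement (linearPart G E b)‖ * ‖a • (0 : E)‖ ≤
        ‖displacement (linearPart G E b)‖ * ‖b • (0 : E)‖ := by
      by_cases hB : linearPart G E b = 1
      · rw [displacement_eq_zero_iff.2 hB, norm_zero, zero_mul, zero_mul]
      · exact mul_le_mul_of_nonneg_left (hab hB) (norm_nonneg _)
    calc 4 * ‖⁅a, b⁆ • (0 : E) - T (b • 0)‖
        ≤ 4 * (‖displacement (linearPart G E b)‖ * (2 * ‖T‖ * ‖b • (0 : E)‖ + ‖a • (0 : E)‖)) := by
          gcongr
          exact norm_commutator_smul_zero_sub_le a b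
      _ ≤ 4 * (‖displacement (linearPart G E b)‖ * (2 * (1 / 2) * ‖b • (0 : E)‖) +
            ‖displacement (linearPart G E b)‖ * ‖b • (0 : E)‖) := by
          rw [mul_add]
          gcongr
      _ = 8 * ‖displacement (linearPart G E b)‖ * ‖b • (0 : E)‖ := by ring
      _ ≤ normGap T * ‖b • (0 : E)‖ := by
          gcongr
          linarith
  refine ⟨mem_coneAround_of_norm_sub_displacement_le ha hcone herr, ?_⟩
  have hpos : 0 < ‖b • (0 : E)‖ := norm_pos_of_mem_coneAround hcone
  have hTb : ‖T (b • (0 : E))‖ ≤ 1 / 2 * ‖b • (0 : E)‖ := T.le_of_opNorm_le ha' _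
  have hgap : normGap T * ‖b • (0 : E)‖ ≤ 1 / 2 * ‖b • (0 : E)‖ := by
    gcongr
    exact (normGap_le_opNorm T).trans ha'
  linarith [norm_le_insert' (⁅a, b⁆ • (0 : E)) (T (b • 0))]

theorem linearPart_eq_one_of_norm_displacement_le
    (hdisc : Tendsto (fun g : G => g • (0 : E)) cofinite (cocompact E))
    (hD : ∀ x : E, ∃ g : G, dist (g • (0 : E)) x ≤ D) {g : G}
    (hg : ‖displacement (linearPart G E g)‖ ≤ 1 / 2) : linearPart G E g = 1 := by
  by_contra hne
  have hnorm := tendsto_norm_cocompact_atTop.comp hdisc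
  obtain ⟨a, ⟨ha, ha'⟩, hmin⟩ := hnorm.exists_within_forall_le
    (s := {g | linearPart G E g ≠ 1 ∧ ‖displacement (linearPart G E g)‖ ≤ 1 / 2}) ⟨g, hne, hg⟩
  set T := displacement (linearPart G E a)
  have hT : T ≠ 0 := displacement_eq_zero_iff.not.2 ha
  have hgap := normGap_pos hT
  have hgap' := normGap_le_opNorm T
  obtain ⟨b, ⟨hb, hcone⟩, hbmin⟩ := hnorm.exists_within_forall_le
    (s := {g | ‖displacement (linearPart G E g)‖ ≤ normGap T / 8 ∧
      g • (0 : E) ∈ coneAround (normAttainingSubspace T)})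
    (exists_norm_displacement_le_and_mem_coneAround hD (normAttainingSubspace_ne_bot hT)
      (by positivity))
  have hab : linearPart G E b ≠ 1 → ‖a • (0 : E)‖ ≤ ‖b • (0 : E)‖ := fun hB =>
    hmin b ⟨hB, by linarith⟩
  obtain ⟨hcone', hlt⟩ := commutator_mem_coneAround_and_norm_lt ha ha' hab hb hcone
  have hsmall : ‖displacement (linearPart G E ⁅a, b⁆)‖ ≤ normGap T / 8 := by
    rw [map_commutatorElement]
    calc ‖displacement ⁅linearPart G E a, linearPart G E b⁆‖
        ≤ 2 * ‖T‖ * ‖displacement (linearPart G E b)‖ := norm_displacement_commutator_le _ _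
      _ ≤ 2 * (1 / 2) * (normGap T / 8) := by gcongr
      _ = normGap T / 8 := by ring
  exact (hbmin ⁅a, b⁆ ⟨hsmall, hcone'⟩).not_gt hlt

theorem finiteIndex_ker_linearPart
    (hdisc : Tendsto (fun g : G => g • (0 : E)) cofinite (cocompact E))
    (hD : ∀ x : E, ∃ g : G, dist (g • (0 : E)) x ≤ D) : (linearPart G E).ker.FiniteIndex := by
  have : Finite (linearPart G E).range := finite_of_forall_norm_displacement_le one_half_pos <| by
    rintro _ ⟨g, rfl⟩ hg
    exact linearPart_eq_one_of_norm_displacement_le hdisc hD hg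
  exact Subgroup.finiteIndex_ker _

theorem span_range_translationVector
    (hdisc : Tendsto (fun g : G => g • (0 : E)) cofinite (cocompact E))
    (hD : ∀ x : E, ∃ g : G, dist (g • (0 : E)) x ≤ D) :
    Submodule.span ℝ (Set.range (translationVector G E)) = ⊤ := by
  set W := Submodule.span ℝ (Set.range (translationVector G E))
  by_contra hW
  obtain ⟨g, hg, hcone⟩ := exists_norm_displacement_le_and_mem_coneAround hD
    (mt W.orthogonal_eq_bot_iff.1 hW) one_half_pos
  have hker : g ∈ (linearPart G E).ker := linearPart_eq_one_of_norm_displacement_le hdisc hD hg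
  have hgW : g • (0 : E) ∈ W := Submodule.subset_span ⟨.ofMul ⟨g, hker⟩, rfl⟩
  have hzero : Wᗮ.starProjection (g • (0 : E)) = 0 := W.starProjection_orthogonal_apply_eq_zero hgW
  have hlt : ‖g • (0 : E)‖ < 2 * ‖Wᗮ.starProjection (g • (0 : E))‖ :=
    norm_lt_of_mem_coneAround hcone
  rw [hzero, norm_zero, mul_zero] at hlt
  exact hlt.not_ge (norm_nonneg _)

theorem nonempty_ker_linearPart_mulEquiv [FaithfulSMul G E]
    (hdisc : Tendsto (fun g : G => g • (0 : E)) cofinite (cocompact E))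
    (hD : ∀ x : E, ∃ g : G, dist (g • (0 : E)) x ≤ D) :
    Nonempty ((linearPart G E).ker ≃* Multiplicative (Fin (Module.finrank ℝ E) → ℤ)) :=
  (nonempty_addEquiv_pi_int_of_tendsto_cofinite_cocompact translationVector_injective
    (hdisc.comp Subtype.val_injective.tendsto_cofinite)
    (span_range_translationVector hdisc hD)).map AddEquiv.toMultiplicativeRight

theorem stmt19_general [FaithfulSMul G E]
    (hpd : ∀ K : Set E, IsCompact K → {g : G | ((fun x => g • x) '' K ∩ K).Nonempty}.Finite)
    (hcc : ∃ K : Set E, IsCompact K ∧ ∀ x, ∃ g : G, ∃ y ∈ K, g • y = x) :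
    (linearPart G E).ker.Normal ∧
    Nonempty ((linearPart G E).ker ≃* Multiplicative (Fin (Module.finrank ℝ E) → ℤ)) ∧
    (linearPart G E).ker.FiniteIndex := by
  have hdisc := tendsto_smul_cofinite_cocompact hpd (0 : E)
  obtain ⟨D, hD⟩ := exists_dist_smul_le hcc (0 : E)
  exact ⟨inferInstance, nonempty_ker_linearPart_mulEquiv hdisc hD,
    finiteIndex_ker_linearPart hdisc hD⟩

end Crystallographic

theorem transSub_eq_ker_linearPart (m : ℕ) (G : Type*) [Group G]
    [MulAction G (EuclideanSpace ℝ (Fin m))] [IsIsometricSMul G (EuclideanSpace ℝ (Fin m))] :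
    transSub m G = (linearPart G (EuclideanSpace ℝ (Fin m))).ker :=
  Subgroup.ext fun _ => mem_ker_linearPart_iff.symm

/-- first Bieberbach theorem: Let `Γ` be a crystallographic
group, i.e. a group acting faithfully, isometrically, properly discontinuously
and cocompactly on `ℝ^m`. Then the subgroup `A₀` of pure translations in `Γ` is
normal, free abelian of rank `m`, and of finite index (so `1 → A₀ → Γ → T → 1`
with `T` finite). -/
theorem stmt19 (m : ℕ) (G : Type*) [Group G]
    [MulAction G (EuclideanSpace ℝ (Fin m))]
    [FaithfulSMul G (EuclideanSpace ℝ (Fin m))]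
    (hiso : ∀ g : G, Isometry (fun x : EuclideanSpace ℝ (Fin m) => g • x))
    (hpd : ∀ K : Set (EuclideanSpace ℝ (Fin m)), IsCompact K →
      {g : G | ((fun x => g • x) '' K ∩ K).Nonempty}.Finite)
    (hcc : ∃ K : Set (EuclideanSpace ℝ (Fin m)), IsCompact K ∧
      ∀ x, ∃ g : G, ∃ y ∈ K, g • y = x) :
    (transSub m G).Normal ∧
    Nonempty (↥(transSub m G) ≃* Multiplicative (Fin m → ℤ)) ∧
    (transSub m G).FiniteIndex := by
  have : IsIsometricSMul G (EuclideanSpace ℝ (Fin m)) := ⟨hiso⟩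
  have hker := stmt19_general hpd hcc
  rwa [finrank_euclideanSpace_fin, ← transSub_eq_ker_linearPart] at hker
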